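/- Formal Poincaré Lemma in degree n−1 (n ≥ 2): if g₁,…,gₙ ∈ R satisfy Σ_{i=1}^n ∂ᵢ(gᵢ) = 0, then the vector (g₁,…,gₙ) ∈ R^n lies in the additive subgroup of R^n generated by the elements ∂ⱼ(h)·eᵢ − ∂ᵢ(h)·eⱼ for h ∈ R and 1 ≤ i < j ≤ n, where e₁,…,eₙ denotes the standard basis of the free module R^n. -/

import Mathlib

noncomputable section

/-- The formal partial derivative `∂ᵢ` on `ℂ[[x₁,…,xₙ]]`, determined by
`coeff α (∂ᵢ g) = (α i + 1) • coeff (α + eᵢ) g`. -/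
def pd {σ : Type*} (i : σ) (g : MvPowerSeries σ ℂ) : MvPowerSeries σ ℂ :=
  fun α => ((α i : ℂ) + 1) * MvPowerSeries.coeff (α + Finsupp.single i 1) g

lemma coeff_pd {σ : Type*} (i : σ) (g : MvPowerSeries σ ℂ) (α : σ →₀ ℕ) :
    MvPowerSeries.coeff α (pd i g) =
      ((α i : ℂ) + 1) * MvPowerSeries.coeff (α + Finsupp.single i 1) g := rfl

/-!
Let `∫ᵢ` be the formal antiderivative in `xᵢ` without terms free of `xᵢ`. Fix `a ≠ b` and put
`hⱼ = ∫ₐ gⱼ`. The sum of the elementary curls `∂ₐ(hⱼ)·eⱼ − ∂ⱼ(hⱼ)·eₐ` is `g − f·eₐ` with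
`f = ∑ⱼ ∂ⱼ hⱼ`, and `∂ₐ f` is the divergence of `g`, hence zero. As `∂ₐ` commutes with `∫_b`,
also `∂ₐ ∫_b f = 0`, so the remainder `f·eₐ` is the single elementary curl
`∂_b(∫_b f)·eₐ − ∂ₐ(∫_b f)·e_b`.
-/

open MvPowerSeries

lemma pd_eq_pderiv {σ : Type*} (i : σ) (g : MvPowerSeries σ ℂ) : pd i g = pderiv ℂ i g := by
  ext α
  rw [coeff_pd, coeff_pderiv, mul_comm]

lemma pderiv_pderiv_comm {σ A : Type*} [CommSemiring A] (i j : σ) (f : MvPowerSeries σ A) :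
    pderiv A i (pderiv A j f) = pderiv A j (pderiv A i f) := by
  obtain rfl | hij := eq_or_ne i j
  · rfl
  ext α
  simp only [coeff_pderiv, Finsupp.add_apply, Finsupp.single_eq_of_ne hij,
    Finsupp.single_eq_of_ne hij.symm, add_zero]
  rw [add_right_comm, mul_right_comm]

section Antiderivative

variable {σ A : Type*} [CommSemiring A] [Algebra ℚ A]

/-- The formal antiderivative with respect to `xᵢ` having no terms free of `xᵢ`. A coefficient at
`α` with `α i = 0`, where the truncated `α - eᵢ` is meaningless, vanishes because `0⁻¹ = 0`. -/
def antideriv (i : σ) : MvPowerSeries σ A →ₗ[A] MvPowerSeries σ A :=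
  LinearMap.pi fun α => (α i : ℚ)⁻¹ • coeff (α - Finsupp.single i 1)

lemma coeff_antideriv (i : σ) (f : MvPowerSeries σ A) (α : σ →₀ ℕ) :
    coeff α (antideriv i f) = (α i : ℚ)⁻¹ • coeff (α - Finsupp.single i 1) f := rfl

lemma pderiv_antideriv_self (i : σ) (f : MvPowerSeries σ A) :
    pderiv A i (antideriv i f) = f := by
  ext α
  have cast_succ : ((α i : A) + 1) = algebraMap ℚ A (α i + 1) := by
    simp only [map_add, map_natCast, map_one]
  rw [coeff_pderiv, coeff_antideriv, add_tsub_cancel_right, Finsupp.add_apply,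
    Finsupp.single_eq_same, Nat.cast_add_one, cast_succ, mul_comm, ← Algebra.smul_def,
    smul_inv_smul₀ (Nat.cast_add_one_ne_zero _)]

lemma pderiv_antideriv_of_ne {i j : σ} (hij : i ≠ j) (f : MvPowerSeries σ A) :
    pderiv A j (antideriv i f) = antideriv i (pderiv A j f) := by
  ext α
  simp only [coeff_pderiv, coeff_antideriv, Finsupp.add_apply, Finsupp.tsub_apply,
    Finsupp.single_eq_of_ne hij, Finsupp.single_eq_of_ne hij.symm, add_zero, tsub_zero,
    smul_mul_assoc]
  obtain hα | hα := Nat.eq_zero_or_pos (α i)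
  · simp only [hα, Nat.cast_zero, inv_zero, zero_smul]
  · rw [tsub_add_eq_add_tsub (Finsupp.single_le_iff.mpr hα)]

lemma pderiv_sum_pderiv_antideriv [Fintype σ] (a : σ) (g : σ → MvPowerSeries σ A) :
    pderiv A a (∑ j, pderiv A j (antideriv a (g j))) = ∑ j, pderiv A j (g j) := by
  simp only [map_sum, pderiv_pderiv_comm a, pderiv_antideriv_self]

end Antiderivative

section ElementaryCurl

variable {σ A : Type*} [CommRing A]

/-- The divergence-free vector `∂ⱼ(h)·eᵢ − ∂ᵢ(h)·eⱼ`: the curl of the potential `h` in the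
`(i, j)`-plane. -/
def elementaryCurl [DecidableEq σ] (i j : σ) (h : MvPowerSeries σ A) : σ → MvPowerSeries σ A :=
  Pi.single i (pderiv A j h) - Pi.single j (pderiv A i h)

lemma neg_elementaryCurl [DecidableEq σ] (i j : σ) (h : MvPowerSeries σ A) :
    -elementaryCurl i j h = elementaryCurl j i h :=
  neg_sub _ _

lemma elementaryCurl_mem_closure [LinearOrder σ] (i j : σ) (h : MvPowerSeries σ A) :
    elementaryCurl i j h ∈ AddSubgroup.closure
      {v | ∃ (h : MvPowerSeries σ A) (i j : σ), i < j ∧ v = elementaryCurl i j h} := by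
  obtain hij | rfl | hji := lt_trichotomy i j
  · exact AddSubgroup.subset_closure ⟨h, i, j, hij, rfl⟩
  · rw [elementaryCurl, sub_self]
    exact zero_mem _
  · rw [← neg_elementaryCurl]
    exact neg_mem (AddSubgroup.subset_closure ⟨h, j, i, hji, rfl⟩)

variable [Algebra ℚ A]

lemma elementaryCurl_antideriv [DecidableEq σ] {a b : σ} (hab : a ≠ b) {f : MvPowerSeries σ A}
    (hf : pderiv A a f = 0) : elementaryCurl a b (antideriv b f) = Pi.single a f := by
  rw [elementaryCurl, pderiv_antideriv_self, pderiv_antideriv_of_ne hab.symm, hf, map_zero,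
    Pi.single_zero, sub_zero]

lemma sum_elementaryCurl_antideriv [Fintype σ] [DecidableEq σ] (a : σ)
    (g : σ → MvPowerSeries σ A) :
    ∑ j, elementaryCurl j a (antideriv a (g j)) =
      g - Pi.single a (∑ j, pderiv A j (antideriv a (g j))) := by
  simp only [elementaryCurl, pderiv_antideriv_self, Finset.sum_sub_distrib, Finset.univ_sum_single]
  exact congrArg (g - ·) (map_sum (AddMonoidHom.single (fun _ => MvPowerSeries σ A) a) _ _).symm

theorem formal_poincare_deg_pred_general [Fintype σ] [LinearOrder σ] [Nontrivial σ]
    {g : σ → MvPowerSeries σ A} (hdiv : ∑ i, pderiv A i (g i) = 0) :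
    g ∈ AddSubgroup.closure
      {v | ∃ (h : MvPowerSeries σ A) (i j : σ), i < j ∧
        v = Pi.single i (pderiv A j h) - Pi.single j (pderiv A i h)} := by
  obtain ⟨a, b, hab⟩ := exists_pair_ne σ
  set f := ∑ j, pderiv A j (antideriv a (g j))
  have pderiv_f : pderiv A a f = 0 := (pderiv_sum_pderiv_antideriv a g).trans hdiv
  have g_eq : g = ∑ j, elementaryCurl j a (antideriv a (g j)) +
      elementaryCurl a b (antideriv b f) := by
    rw [sum_elementaryCurl_antideriv, elementaryCurl_antideriv hab pderiv_f, sub_add_cancel]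
  rw [g_eq]
  exact add_mem (sum_mem fun j _ => elementaryCurl_mem_closure j a _)
    (elementaryCurl_mem_closure a b _)

end ElementaryCurl

/-- **Formal Poincaré Lemma in degree n−1** (`n ≥ 2`): if `Σᵢ ∂ᵢ(gᵢ) = 0`, then the
vector `(g₁,…,gₙ) ∈ Rⁿ` lies in the additive subgroup of `Rⁿ` generated by the
elements `∂ⱼ(h)·eᵢ − ∂ᵢ(h)·eⱼ` for `h ∈ R` and `i < j`. -/
theorem formal_poincare_deg_pred (n : ℕ) (hn : 2 ≤ n)
    (g : Fin n → MvPowerSeries (Fin n) ℂ)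
    (hdiv : ∑ i : Fin n, pd i (g i) = 0) :
    g ∈ AddSubgroup.closure
      {v : Fin n → MvPowerSeries (Fin n) ℂ |
        ∃ (h : MvPowerSeries (Fin n) ℂ) (i j : Fin n), i < j ∧
          v = Pi.single i (pd j h) - Pi.single j (pd i h)} := by
  have : Nontrivial (Fin n) := Fin.nontrivial_iff_two_le.mpr hn
  simp only [pd_eq_pderiv] at hdiv ⊢
  exact formal_poincare_deg_pred_general hdiv
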